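/- arXiv:2307.06595 — 2 statements merged into one kernel-verified Lean document; each statement's English description precedes it below -/
import Mathlib

section
/- Let 𝒞 ⊆ 𝕄 be a sum-rank metric code. Then dim(𝒞) ≤ max over C = (C_1,...,C_t) ∈ 𝒞 of Σ_{i=1}^t m_i · rank(C_i). In particular, if m_1 = ... = m_t = m, then dim(𝒞) ≤ m · maxsrk(𝒞). -/
open Module

variable {F : Type*} [Field F] [Fintype F] {t : ℕ} {m n : Fin t → ℕ}

/-- The sum-rank weight of an element of `𝕄 = F^{m 0 × n 0} × ⋯ × F^{m (t-1) × n (t-1)}`. -/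
noncomputable def srk (C : ∀ i : Fin t, Matrix (Fin (m i)) (Fin (n i)) F) : ℕ :=
  ∑ i, (C i).rank

/-- The maximum sum-rank of a code. -/
noncomputable def maxsrk (𝒞 : Submodule F (∀ i : Fin t, Matrix (Fin (m i)) (Fin (n i)) F)) : ℕ :=
  sSup {w | ∃ C ∈ 𝒞, srk C = w}

/-- The minimum distance of a code. -/
noncomputable def minDist (𝒞 : Submodule F (∀ i : Fin t, Matrix (Fin (m i)) (Fin (n i)) F)) : ℕ :=
  sInf {w | ∃ C ∈ 𝒞, C ≠ 0 ∧ srk C = w}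

/-- The maximum rank of a subspace of a matrix space. -/
noncomputable def maxrank {a b : ℕ} (𝒜 : Submodule F (Matrix (Fin a) (Fin b) F)) : ℕ :=
  sSup {w | ∃ A ∈ 𝒜, A.rank = w}

/-- Optimal anticodes in a single matrix space. -/
def IsOptAnticode {a b : ℕ} (𝒜 : Submodule F (Matrix (Fin a) (Fin b) F)) : Prop :=
  Module.finrank F 𝒜 = a * maxrank 𝒜

/-- The weight of a sum-rank metric code: the minimum of `maxsrk` over products of
optimal anticodes containing it. -/
noncomputable def codeWt (𝒞 : Submodule F (∀ i : Fin t, Matrix (Fin (m i)) (Fin (n i)) F)) : ℕ :=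
  sInf {w | ∃ 𝒜 : ∀ i : Fin t, Submodule F (Matrix (Fin (m i)) (Fin (n i)) F),
    (∀ i, IsOptAnticode (𝒜 i)) ∧ 𝒞 ≤ Submodule.pi Set.univ 𝒜 ∧
      maxsrk (Submodule.pi Set.univ 𝒜) = w}

/-- The `r`-th generalized sum-rank weight of a code. -/
noncomputable def gw (𝒞 : Submodule F (∀ i : Fin t, Matrix (Fin (m i)) (Fin (n i)) F))
    (r : ℕ) : ℕ :=
  sInf {w | ∃ 𝒟 : Submodule F (∀ i : Fin t, Matrix (Fin (m i)) (Fin (n i)) F),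
    𝒟 ≤ 𝒞 ∧ r ≤ Module.finrank F 𝒟 ∧ codeWt 𝒟 = w}

/-! The dimension of a code is the number of positions, in the order block by block and row by row,
at which some codeword has its first nonzero entry. In an `m × n` block these positions are covered
by `max m n` cyclic diagonals, so at least a fraction `1 / max m n` of them lie in distinct rows and
distinct columns. Taking such positions in all blocks, add up codewords leading there, from the
earliest row to the latest, keeping or skipping each one so that the chosen rows stay linearly
independent. The sum is a single codeword whose rank in each block is at least the number of
positions chosen there. -/

open Finset in
lemma exists_matching_card_le_card_mul {X Y G : Type*} [AddGroup G] [Fintype G]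
    (e : X ↪ G) (e' : Y ↪ G) (P : Finset (X × Y)) :
    ∃ S ⊆ P, Set.InjOn Prod.fst (S : Set (X × Y)) ∧ Set.InjOn Prod.snd (S : Set (X × Y)) ∧
      #P ≤ Fintype.card G * #S := by
  classical
  let diagonal (g : G) : Finset (X × Y) := {p ∈ P | e p.1 + e' p.2 = g}
  obtain ⟨g, -, hg⟩ := exists_max_image univ (fun g => #(diagonal g)) univ_nonempty
  have sum_eq {p : X × Y} (hp : p ∈ diagonal g) : e p.1 + e' p.2 = g := (mem_filter.1 hp).2
  refine ⟨diagonal g, filter_subset _ _, fun p hp q hq h => ?_, fun p hp q hq h => ?_, ?_⟩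
  · refine Prod.ext h (e'.injective (add_left_cancel (a := e p.1) ?_))
    rw [sum_eq hp, h, sum_eq hq]
  · refine Prod.ext (e.injective (add_right_cancel (b := e' p.2) ?_)) h
    rw [sum_eq hp, h, sum_eq hq]
  · rw [mul_comm]
    exact card_le_mul_card_image_of_maps_to (fun _ _ => mem_univ _) _ hg

open Finset in
lemma exists_matching_card_le_max_card_mul {X Y : Type*} [Fintype X] [Fintype Y]
    (P : Finset (X × Y)) :
    ∃ S ⊆ P, Set.InjOn Prod.fst (S : Set (X × Y)) ∧ Set.InjOn Prod.snd (S : Set (X × Y)) ∧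
      #P ≤ max (Fintype.card X) (Fintype.card Y) * #S := by
  rcases P.eq_empty_or_nonempty with rfl | ⟨⟨x, y⟩, -⟩
  · exact ⟨∅, by simp⟩
  have : NeZero (max (Fintype.card X) (Fintype.card Y)) :=
    ⟨(lt_max_of_lt_left (Fintype.card_pos_iff.2 ⟨x⟩)).ne'⟩
  obtain ⟨e⟩ : Nonempty (X ↪ ZMod (max (Fintype.card X) (Fintype.card Y))) :=
    Function.Embedding.nonempty_of_card_le (by simp [ZMod.card])
  obtain ⟨e'⟩ : Nonempty (Y ↪ ZMod (max (Fintype.card X) (Fintype.card Y))) :=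
    Function.Embedding.nonempty_of_card_le (by simp [ZMod.card])
  simpa only [ZMod.card] using exists_matching_card_le_card_mul e e' P

/-- The pivots of a space of functions on an ordered index set: the positions of the first nonzero
entries of its members, as in a reduced row echelon form. -/
def pivots {R α : Type*} [Semiring R] [Preorder α] (V : Submodule R (α → R)) : Set α :=
  {a | ∃ f ∈ V, IsLeast f.support a}

lemma finrank_le_card_of_pivots_subset_range {R α β : Type*} [Ring R] [StrongRankCondition R]
    [LinearOrder α] [WellFoundedLT α] [Fintype β] {V : Submodule R (α → R)} {e : β → α}
    (he : pivots V ⊆ Set.range e) : finrank R V ≤ Fintype.card β := by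
  have restrict_injective : Function.Injective ((LinearMap.funLeft R R e).domRestrict V) := by
    rw [injective_iff_map_eq_zero]
    rintro ⟨f, hf⟩ hf_zero
    by_contra hne
    have support_nonempty : f.support.Nonempty :=
      Function.support_nonempty_iff.2 fun h => hne (Subtype.ext h)
    obtain ⟨a, ha, hmin⟩ := wellFounded_lt.has_min f.support support_nonempty
    obtain ⟨b, rfl⟩ := he ⟨f, hf, ha, fun c hc => not_lt.1 (hmin c hc)⟩
    exact ha (congrFun hf_zero b)
  simpa using LinearMap.finrank_le_finrank_of_injective restrict_injective

lemma linearIndependent_of_isLeast_support {R ι α : Type*} [Ring R] [NoZeroDivisors R]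
    [LinearOrder α] {v : ι → α → R} {a : ι → α} (ha : Function.Injective a)
    (hv : ∀ s, IsLeast (v s).support (a s)) : LinearIndependent R v := by
  classical
  rw [linearIndependent_iff']
  intro T c hsum
  by_contra! hc
  obtain ⟨s, hs, hmin⟩ := Finset.exists_min_image {s ∈ T | c s ≠ 0} a
    (by simpa [Finset.Nonempty] using hc)
  obtain ⟨hsT, hcs⟩ := Finset.mem_filter.1 hs
  have other_terms : ∀ s' ∈ T, s' ≠ s → c s' * v s' (a s) = 0 := by
    intro s' hs'T hne
    by_contra h
    obtain ⟨hc', hv'⟩ := mul_ne_zero_iff.1 h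
    have hle : a s ≤ a s' := hmin s' (Finset.mem_filter.2 ⟨hs'T, hc'⟩)
    exact hne (ha (((hv s').2 hv').antisymm hle))
  have coeff_eq_zero : c s * v s (a s) = 0 := by
    rw [← Finset.sum_eq_single_of_mem s hsT other_terms]
    simpa using congrFun hsum (a s)
  exact mul_ne_zero hcs (hv s).1 coeff_eq_zero

lemma linearIndependent_update_of_notMem_span {K ι V : Type*} [DivisionRing K] [AddCommGroup V]
    [Module K V] [DecidableEq ι] {v : ι → V} (hv : LinearIndependent K v) {a : ι} {w : V}
    (hw : w ∉ Submodule.span K (v '' {a}ᶜ)) : LinearIndependent K (Function.update v a w) := by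
  have eqOn : Set.EqOn v (Function.update v a w) {a}ᶜ := fun s hs =>
    (Function.update_of_ne hs w v).symm
  have indepOn : LinearIndepOn K (Function.update v a w) {a}ᶜ :=
    (hv.linearIndepOn {a}ᶜ).congr eqOn
  have notMem_span :
      Function.update v a w a ∉ Submodule.span K (Function.update v a w '' {a}ᶜ) := by
    rwa [Function.update_self, ← eqOn.image_eq]
  rw [← linearIndepOn_univ_iff, ← Set.union_compl_self {a}, ← Set.insert_eq]
  exact indepOn.insert notMem_span

lemma linearIndependent_update_or_update_add {K ι V : Type*} [DivisionRing K] [AddCommGroup V]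
    [Module K V] [DecidableEq ι] {v : ι → V} (hv : LinearIndependent K v) (a : ι) (w : V) :
    LinearIndependent K (Function.update v a w) ∨
      LinearIndependent K (Function.update v a (w + v a)) := by
  by_cases hw : w ∈ Submodule.span K (v '' {a}ᶜ)
  · refine .inr (linearIndependent_update_of_notMem_span hv fun h => ?_)
    exact hv.notMem_span_image (by simp) ((Submodule.add_mem_iff_right _ hw).1 h)
  · exact .inl (linearIndependent_update_of_notMem_span hv hw)

lemma exists_mem_linearIndependent_of_triangular {K ι α W V : Type*} [DivisionRing K] [Finite ι]
    [LinearOrder α] [AddCommGroup W] [Module K W] [AddCommGroup V] [Module K V]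
    (𝒞 : Submodule K W) (R : ι → W →ₗ[K] V) {A : ι → W} (hA : ∀ s, A s ∈ 𝒞)
    {f : ι → α} (hf : Function.Injective f) (hzero : ∀ s s', f s < f s' → R s (A s') = 0)
    (hdiag : LinearIndependent K fun s => R s (A s)) :
    ∃ C ∈ 𝒞, LinearIndependent K fun s => R s C := by
  classical
  have := Fintype.ofFinite ι
  suffices partial_replacement : ∀ T : Finset ι, ∃ C ∈ 𝒞,
      LinearIndependent K (T.piecewise (fun s => R s C) fun s => R s (A s)) by
    simpa using partial_replacement Finset.univ
  intro T
  induction T using Finset.induction_on_max_value f with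
  | empty => exact ⟨0, 𝒞.zero_mem, by simpa using hdiag⟩
  | insert a T ha hmax ih =>
    obtain ⟨C, hC, hindep⟩ := ih
    -- Adding `A a` to `C` leaves the earlier rows unchanged, since `R s (A a) = 0` for `s ∈ T`.
    rcases linearIndependent_update_or_update_add hindep a (R a C) with h | h
    · exact ⟨C, hC, by rwa [Finset.piecewise_insert]⟩
    · refine ⟨C + A a, 𝒞.add_mem hC (hA a), ?_⟩
      have rows_unchanged : T.piecewise (fun s => R s (C + A a)) (fun s => R s (A s)) =
          T.piecewise (fun s => R s C) fun s => R s (A s) := by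
        refine T.piecewise_congr (fun s hs => ?_) fun _ _ => rfl
        have hlt : f s < f a := (hmax s hs).lt_of_ne fun h => ha (hf h ▸ hs)
        rw [map_add, hzero s a hlt, add_zero]
      rw [Finset.piecewise_insert, rows_unchanged, map_add]
      rwa [Finset.piecewise_eq_of_notMem _ _ _ ha] at h

section Blocks

variable {R ι : Type*} [Semiring R] {ρ κ : ι → Type*}

section Entries

/-- A tuple of matrices read as the vector of all its entries, block by block and row by row. -/
def entries : (∀ i, Matrix (ρ i) (κ i) R) ≃ₗ[R] ((Σₗ i, ρ i ×ₗ κ i) → R) where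
  toFun C p := C (ofLex p).1 (ofLex (ofLex p).2).1 (ofLex (ofLex p).2).2
  invFun f i := Matrix.of fun r c => f (toLex ⟨i, toLex (r, c)⟩)
  map_add' _ _ := rfl
  map_smul' _ _ := rfl
  left_inv _ := rfl
  right_inv _ := rfl

variable [LinearOrder ι] [∀ i, LinearOrder (ρ i)] [∀ i, LinearOrder (κ i)]
  {C : ∀ i, Matrix (ρ i) (κ i) R} {i : ι} {p : ρ i × κ i}

lemma isLeast_support_row (h : IsLeast (entries C).support (toLex ⟨i, toLex p⟩)) :
    IsLeast (C i p.1).support p.2 := by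
  refine ⟨h.1, fun c hc => ?_⟩
  have hmem : toLex ⟨i, toLex (p.1, c)⟩ ∈ (entries C).support := hc
  by_contra! hlt
  exact (h.2 hmem).not_gt (Sigma.Lex.right _ _ (Prod.Lex.right _ hlt))

lemma row_eq_zero_of_lt (h : IsLeast (entries C).support (toLex ⟨i, toLex p⟩)) {j : ι} {r : ρ j}
    (hlt : (toLex ⟨j, r⟩ : Σₗ i, ρ i) < toLex ⟨i, p.1⟩) : C j r = 0 := by
  funext c
  by_contra hc
  have hmem : toLex ⟨j, toLex (r, c)⟩ ∈ (entries C).support := hc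
  refine (h.2 hmem).not_gt ?_
  cases hlt with
  | left _ _ hij => exact Sigma.Lex.left _ _ hij
  | right _ _ hr => exact Sigma.Lex.right _ _ (Prod.Lex.left _ _ hr)

end Entries

section PaddedRow

variable [DecidableEq ι]

/-- Row `r` of block `i`, padded by zeros to a row of the block diagonal matrix of the tuple. Rows
of different blocks can thus be compared in one vector space. -/
def paddedRow (i : ι) (r : ρ i) : (∀ i, Matrix (ρ i) (κ i) R) →ₗ[R] (∀ i, κ i → R) where
  toFun C := Pi.single i (C i r)
  map_add' C D := Pi.single_add (f := fun i => κ i → R) i (C i r) (D i r)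
  map_smul' c C := Pi.single_smul (f := fun i => κ i → R) i c (C i r)

lemma paddedRow_eq_zero {C : ∀ i, Matrix (ρ i) (κ i) R} {i : ι} {r : ρ i} (h : C i r = 0) :
    paddedRow i r C = 0 :=
  (congrArg (LinearMap.single R (fun i => κ i → R) i) h).trans (map_zero _)

lemma linearIndependent_paddedRow {τ : ι → Type*} {r : ∀ i, τ i → ρ i}
    {A : (Σ i, τ i) → ∀ i, Matrix (ρ i) (κ i) R}
    (h : ∀ i, LinearIndependent R fun p => A ⟨i, p⟩ i (r i p)) :
    LinearIndependent R fun s : Σ i, τ i => paddedRow s.1 (r s.1 s.2) (A s) :=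
  Pi.linearIndependent_single (fun i p => A ⟨i, p⟩ i (r i p)) h

lemma linearIndependent_row_of_paddedRow {τ : ι → Type*} {r : ∀ i, τ i → ρ i}
    {C : ∀ i, Matrix (ρ i) (κ i) R}
    (h : LinearIndependent R fun s : Σ i, τ i => paddedRow s.1 (r s.1 s.2) C) (i : ι) :
    LinearIndependent R ((C i).submatrix (r i) id).row := by
  have block_indep : LinearIndependent R
      (LinearMap.single R (fun i => κ i → R) i ∘ ((C i).submatrix (r i) id).row) :=
    h.comp (Sigma.mk i) sigma_mk_injective
  exact block_indep.of_comp _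

end PaddedRow

lemma exists_mem_linearIndependent_rows {K : Type*} [DivisionRing K] [LinearOrder ι]
    [∀ i, LinearOrder (ρ i)] {τ : ι → Type*} [Finite (Σ i, τ i)]
    (𝒞 : Submodule K (∀ i, Matrix (ρ i) (κ i) K)) {r : ∀ i, τ i → ρ i}
    (hr : ∀ i, Function.Injective (r i)) {A : (Σ i, τ i) → ∀ i, Matrix (ρ i) (κ i) K}
    (hA : ∀ s, A s ∈ 𝒞)
    (hzero : ∀ s s' : Σ i, τ i,
      (toLex ⟨s.1, r s.1 s.2⟩ : Σₗ i, ρ i) < toLex ⟨s'.1, r s'.1 s'.2⟩ →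
        A s' s.1 (r s.1 s.2) = 0)
    (hdiag : ∀ i, LinearIndependent K fun p => A ⟨i, p⟩ i (r i p)) :
    ∃ C ∈ 𝒞, ∀ i, LinearIndependent K ((C i).submatrix (r i) id).row := by
  let row (s : Σ i, τ i) : (∀ i, Matrix (ρ i) (κ i) K) →ₗ[K] (∀ i, κ i → K) :=
    paddedRow s.1 (r s.1 s.2)
  have rowIndex_injective :
      Function.Injective fun s : Σ i, τ i => (toLex ⟨s.1, r s.1 s.2⟩ : Σₗ i, ρ i) :=
    toLex.injective.comp (Function.Injective.sigma_map Function.injective_id hr)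
  have padded_zero (s s' : Σ i, τ i)
      (h : (toLex ⟨s.1, r s.1 s.2⟩ : Σₗ i, ρ i) < toLex ⟨s'.1, r s'.1 s'.2⟩) :
      row s (A s') = 0 :=
    paddedRow_eq_zero (hzero s s' h)
  have padded_indep : LinearIndependent K fun s => row s (A s) :=
    linearIndependent_paddedRow hdiag
  obtain ⟨C, hC, h⟩ := exists_mem_linearIndependent_of_triangular 𝒞 row hA
    rowIndex_injective padded_zero padded_indep
  exact ⟨C, hC, linearIndependent_row_of_paddedRow h⟩

lemma exists_mem_card_le_rank {K : Type*} [Field K] [Finite ι] [∀ i, Fintype (κ i)]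
    [LinearOrder ι] [∀ i, LinearOrder (ρ i)] [∀ i, LinearOrder (κ i)]
    (𝒞 : Submodule K (∀ i, Matrix (ρ i) (κ i) K)) (S : ∀ i, Finset (ρ i × κ i))
    (hpivot : ∀ i, ∀ p ∈ S i, toLex ⟨i, toLex p⟩ ∈ pivots (𝒞.map entries.toLinearMap))
    (hfst : ∀ i, Set.InjOn Prod.fst (S i : Set (ρ i × κ i)))
    (hsnd : ∀ i, Set.InjOn Prod.snd (S i : Set (ρ i × κ i))) :
    ∃ C ∈ 𝒞, ∀ i, (S i).card ≤ (C i).rank := by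
  have exists_leading (s : Σ i, S i) :
      ∃ C ∈ 𝒞, IsLeast (entries C).support (toLex ⟨s.1, toLex s.2.1⟩) := by
    obtain ⟨_, ⟨C, hC, rfl⟩, hlead⟩ := hpivot s.1 s.2.1 s.2.2
    exact ⟨C, hC, hlead⟩
  choose A hA hlead using exists_leading
  obtain ⟨C, hC, rows_indep⟩ := exists_mem_linearIndependent_rows 𝒞
    (r := fun i (p : S i) => p.1.1) (fun i => (hfst i).injective) hA
    (fun _ s' => row_eq_zero_of_lt (hlead s'))
    fun i => linearIndependent_of_isLeast_support (hsnd i).injective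
      fun p => isLeast_support_row (hlead ⟨i, p⟩)
  refine ⟨C, hC, fun i => ?_⟩
  calc (S i).card = ((C i).submatrix (fun p : S i => p.1.1) id).rank := by
        rw [(rows_indep i).rank_matrix, Fintype.card_coe]
    _ ≤ (C i).rank := (C i).rank_submatrix_le _ _

end Blocks

theorem exists_mem_finrank_le_sum_max_card_mul_rank {K ι : Type*} [Field K] [Fintype ι]
    {ρ κ : ι → Type*} [∀ i, Fintype (ρ i)] [∀ i, Fintype (κ i)]
    (𝒞 : Submodule K (∀ i, Matrix (ρ i) (κ i) K)) :
    ∃ C ∈ 𝒞, finrank K 𝒞 ≤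
      ∑ i, max (Fintype.card (ρ i)) (Fintype.card (κ i)) * (C i).rank := by
  classical
  obtain ⟨_, _⟩ := exists_wellFoundedLT (α := ι)
  choose _ _ using fun i => exists_wellFoundedLT (α := ρ i)
  choose _ _ using fun i => exists_wellFoundedLT (α := κ i)
  let P (i : ι) : Finset (ρ i × κ i) :=
    {p | toLex ⟨i, toLex p⟩ ∈ pivots (𝒞.map entries.toLinearMap)}
  choose S hSP hfst hsnd hcard using fun i => exists_matching_card_le_max_card_mul (P i)
  obtain ⟨C, hC, hrank⟩ := exists_mem_card_le_rank 𝒞 S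
    (fun i p hp => (Finset.mem_filter.1 (hSP i hp)).2) hfst hsnd
  refine ⟨C, hC, ?_⟩
  have pivots_subset : pivots (𝒞.map entries.toLinearMap) ⊆
      Set.range fun p : Σ i, P i => toLex ⟨p.1, toLex p.2.1⟩ := fun a ha =>
    ⟨⟨(ofLex a).1, ⟨ofLex (ofLex a).2, Finset.mem_filter.2 ⟨Finset.mem_univ _, ha⟩⟩⟩, rfl⟩
  calc finrank K 𝒞 = finrank K (𝒞.map entries.toLinearMap) := (entries.finrank_map_eq 𝒞).symm
    _ ≤ ∑ i, (P i).card := by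
      simpa using finrank_le_card_of_pivots_subset_range pivots_subset
    _ ≤ ∑ i, max (Fintype.card (ρ i)) (Fintype.card (κ i)) * (C i).rank :=
      Finset.sum_le_sum fun i _ => (hcard i).trans (Nat.mul_le_mul_left _ (hrank i))

theorem anticode_bound_general {K : Type*} [Field K] {t : ℕ} {m n : Fin t → ℕ}
    (𝒞 : Submodule K (∀ i : Fin t, Matrix (Fin (m i)) (Fin (n i)) K)) :
    finrank K 𝒞 ≤ sSup {w | ∃ C ∈ 𝒞, ∑ i, max (m i) (n i) * (C i).rank = w} ∧
    ∀ m₀ : ℕ, (∀ i, max (m i) (n i) ≤ m₀) → finrank K 𝒞 ≤ m₀ * maxsrk 𝒞 := by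
  obtain ⟨C, hC, hdim⟩ := exists_mem_finrank_le_sum_max_card_mul_rank 𝒞
  simp only [Fintype.card_fin] at hdim
  have rank_le (D : ∀ i : Fin t, Matrix (Fin (m i)) (Fin (n i)) K) (i : Fin t) :
      (D i).rank ≤ n i := by
    simpa using (D i).rank_le_card_width
  constructor
  · refine hdim.trans (le_csSup ⟨∑ i, max (m i) (n i) * n i, ?_⟩ ⟨C, hC, rfl⟩)
    rintro _ ⟨D, -, rfl⟩
    gcongr
    exact rank_le D _
  · intro m₀ hm₀
    have srk_le_maxsrk : srk C ≤ maxsrk 𝒞 := by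
      refine le_csSup ⟨∑ i, n i, ?_⟩ ⟨C, hC, rfl⟩
      rintro _ ⟨D, -, rfl⟩
      exact Finset.sum_le_sum fun i _ => rank_le D i
    calc finrank K 𝒞 ≤ ∑ i, max (m i) (n i) * (C i).rank := hdim
      _ ≤ ∑ i, m₀ * (C i).rank := by gcongr; exact hm₀ _
      _ = m₀ * srk C := (Finset.mul_sum ..).symm
      _ ≤ m₀ * maxsrk 𝒞 := by gcongr

/-- **Anticode Bound.** The dimension of a sum-rank metric code `𝒞 ⊆ 𝕄` is at most
the maximum over `C ∈ 𝒞` of `∑ i, m i * rank (C i)`; in particular, if all `m i` are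
equal to `m₀`, then `dim 𝒞 ≤ m₀ * maxsrk 𝒞`. -/
theorem anticode_bound (ht : 0 < t)
    (hm_mono : ∀ i j : Fin t, i ≤ j → m j ≤ m i)
    (hn_pos : ∀ i, 0 < n i) (hmn : ∀ i, n i ≤ m i)
    (𝒞 : Submodule F (∀ i : Fin t, Matrix (Fin (m i)) (Fin (n i)) F)) :
    Module.finrank F 𝒞 ≤ sSup {w | ∃ C ∈ 𝒞, ∑ i, m i * (C i).rank = w} ∧
    ∀ m₀ : ℕ, (∀ i, m i = m₀) → Module.finrank F 𝒞 ≤ m₀ * maxsrk 𝒞 := by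
  have bound := anticode_bound_general 𝒞
  simp only [max_eq_left (hmn _)] at bound
  exact ⟨bound.1, fun m₀ hm₀ => bound.2 m₀ fun i => (hm₀ i).le⟩
end

section
/- Let 𝒞 ⊆ 𝕄 be a sum-rank metric code, let j ∈ [t], and let r ∈ [dim(𝒞) − m_j]. If d_{r+m_j}(𝒞) > n_1 + ... + n_{j−1}, then d_{r+m_j}(𝒞) ≥ d_r(𝒞) + 1. -/
open Module

variable {F : Type*} [Field F] [Fintype F] {t : ℕ} {m n : Fin t → ℕ}

/-!
An optimal anticode `V` of maximum rank `k + 1 ≥ 1` in `K^{a × b}`, `b ≤ a`, contains an optimal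
anticode of maximum rank `k`. For this, order the rows and let `W i` be the space of `i`-th rows of
elements of `V` whose rows before `i` vanish. The dimensions of the `W i` add up to `dim V`, and
independent vectors taken from distinct `W i` can be realized as independent rows of one element of
`V`. As all ranks are at most `k + 1`, choosing such vectors greedily gives an `e` with
`e + #{i | e < dim W i} ≤ k + 1`. When `dim V = a * (k + 1)` this forces either `dim W i = k + 1`
for all `i`, or `a = b` and `W i = 0` outside a set `T` of `k + 1` rows. In the first case for every
order of the rows, `V` consists of all matrices with rows in a fixed space, which can be shrunk. In
the second, every row of an element of `V` is in the span of its rows in `T`, and requiring one row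
in `T` to vanish lowers the rank.

For the theorem, take a subcode `𝒟` that attains `d_{r + m_j}(𝒞)` and a product of optimal anticodes
`𝒜 i` that attains `wt(𝒟)`. Since the weight exceeds `n_1 + ⋯ + n_{j-1}`, some `𝒜 i` with `i ≥ j` is
nonzero. Shrinking it lowers the weight and costs at most `m_i ≤ m_j` dimensions of `𝒟`.
-/

open scoped Finset

section LinearAlgebra

variable {K M N ι : Type*} [DivisionRing K] [AddCommGroup M] [Module K M]
  [AddCommGroup N] [Module K N]

theorem finrank_map_add_finrank_inf_ker (f : M →ₗ[K] N) (p : Submodule K M)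
    [FiniteDimensional K p] :
    finrank K (p.map f) + finrank K (p ⊓ LinearMap.ker f : Submodule K M) = finrank K p := by
  have hker : (LinearMap.ker (f.domRestrict p)).map p.subtype = p ⊓ LinearMap.ker f := by
    rw [LinearMap.ker_domRestrict, Submodule.map_comap_subtype]
  rw [← LinearMap.range_domRestrict, ← hker,
    ← (Submodule.equivMapOfInjective p.subtype p.injective_subtype _).finrank_eq,
    LinearMap.finrank_range_add_finrank_ker]

theorem finrank_add_finrank_le_finrank_inf_comap_add (f : M →ₗ[K] N) {p : Submodule K M}
    {q q' : Submodule K N} [FiniteDimensional K p] [FiniteDimensional K q] (hf : p ≤ q.comap f)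
    (hq : q' ≤ q) :
    finrank K p + finrank K q' ≤ finrank K (p ⊓ q'.comap f : Submodule K M) + finrank K q := by
  have hp := finrank_map_add_finrank_inf_ker (q'.mkQ ∘ₗ f) p
  have hq' := finrank_map_add_finrank_inf_ker q'.mkQ q
  have hmap : p.map (q'.mkQ ∘ₗ f) ≤ q.map q'.mkQ := by
    rw [Submodule.map_comp]
    exact Submodule.map_mono (Submodule.map_le_iff_le_comap.2 hf)
  rw [LinearMap.ker_comp, Submodule.ker_mkQ] at hp
  rw [Submodule.ker_mkQ, inf_eq_right.2 hq] at hq'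
  have := Submodule.finrank_mono hmap
  omega

theorem exists_submodule_le_finrank_eq {p : Submodule K M} [FiniteDimensional K p] {k : ℕ}
    (hk : k ≤ finrank K p) : ∃ q ≤ p, finrank K q = k := by
  obtain ⟨f, hf⟩ := exists_linearIndependent_of_le_finrank hk
  refine ⟨(Submodule.span K (Set.range f)).map p.subtype, Submodule.map_subtype_le _ _, ?_⟩
  rw [← (Submodule.equivMapOfInjective p.subtype p.injective_subtype _).finrank_eq,
    finrank_span_eq_card hf, Fintype.card_fin]

theorem finrank_pi_const [Fintype ι] (p : Submodule K M) [FiniteDimensional K p] :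
    finrank K (Submodule.pi Set.univ fun _ : ι => p) = Fintype.card ι * finrank K p := by
  have hrange : LinearMap.range (p.subtype.compLeft ι) = Submodule.pi Set.univ fun _ => p := by
    rw [LinearMap.range_compLeft, Submodule.range_subtype]
  rw [← hrange, LinearMap.finrank_range_of_inj, Module.finrank_pi_fintype, Finset.sum_const,
    Finset.card_univ, smul_eq_mul]
  exact p.injective_subtype.comp_left

theorem finrank_image_finset_le_card (w : ι → M) (S : Finset ι) :
    (w '' S).finrank K ≤ #S := by
  classical
  rw [← Finset.coe_image]
  exact (finrank_span_finset_le_card _).trans Finset.card_image_le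

theorem card_le_finrank_range_of_linearIndepOn [FiniteDimensional K M] {w : ι → M} {S : Finset ι}
    (hw : LinearIndepOn K w S) : #S ≤ (Set.range w).finrank K := by
  have hcard : #S = finrank K (Submodule.span K (Set.range fun i : S => w i)) := by
    simpa using (finrank_span_eq_card hw).symm
  rw [hcard]
  exact Submodule.finrank_mono (Submodule.span_mono (Set.range_comp_subset_range _ w))

theorem exists_mem_notMem_of_finrank_lt [FiniteDimensional K M] {p q : Submodule K M}
    (h : finrank K q < finrank K p) : ∃ x ∈ p, x ∉ q :=
  SetLike.not_le_iff_exists.1 fun hle => h.not_ge (Submodule.finrank_mono hle)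

theorem linearIndepOn_update_insert [DecidableEq ι] {w : ι → M} {S : Set ι} {i : ι} {x : M}
    (hi : i ∉ S) (hw : LinearIndepOn K w S) (hx : x ∉ Submodule.span K (w '' S)) :
    LinearIndepOn K (Function.update w i x) (insert i S) := by
  have heq : Set.EqOn w (Function.update w i x) S := fun l hl =>
    (Function.update_of_ne (ne_of_mem_of_not_mem hl hi) _ _).symm
  rw [linearIndepOn_insert hi, ← heq.image_eq, Function.update_self]
  exact ⟨hw.congr heq, hx⟩

theorem linearIndepOn_update_or_update_add [DecidableEq ι] {w : ι → M} {S : Set ι} {i : ι}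
    (hi : i ∈ S) (hw : LinearIndepOn K w S) (x : M) :
    LinearIndepOn K (Function.update w i x) S ∨
      LinearIndepOn K (Function.update w i (x + w i)) S := by
  have hiS : i ∉ S \ {i} := fun h => h.2 rfl
  have hins : insert i (S \ {i}) = S := Set.insert_sdiff_self_of_mem hi
  rw [← hins, linearIndepOn_insert hiS] at hw
  rw [← hins]
  refine (em (x ∈ Submodule.span K (w '' (S \ {i})))).symm.imp
    (linearIndepOn_update_insert hiS hw.1) fun hx => linearIndepOn_update_insert hiS hw.1 ?_
  rw [Submodule.add_mem_iff_right _ hx]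
  exact hw.2

/- The vectors are chosen one at a time: the subspace that supplies the `e`-th new vector has
dimension larger than `e + #S₀`, so it is not contained in the span of those already chosen. -/
theorem exists_linearIndepOn_union_of_card_filter_lt_finrank [DecidableEq ι]
    [FiniteDimensional K M] (W : ι → Submodule K M) {S₀ : Finset ι} {w₀ : ι → M}
    (h₀ : LinearIndepOn K w₀ S₀) {s : ℕ} {I : Finset ι} (hI : Disjoint S₀ I)
    (hcount : ∀ e < s, s ≤ e + #{i ∈ I | e + #S₀ < finrank K (W i)}) :
    ∃ S ⊆ I, #S = s ∧ ∃ w : ι → M, Set.EqOn w w₀ S₀ ∧ (∀ i ∈ S, w i ∈ W i) ∧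
      LinearIndepOn K w ↑(S₀ ∪ S) := by
  induction s generalizing I with
  | zero => exact ⟨∅, by simp, rfl, w₀, fun _ _ => rfl, by simp, by simpa using h₀⟩
  | succ s ih =>
    obtain ⟨i, hi⟩ : {i ∈ I | s + #S₀ < finrank K (W i)}.Nonempty :=
      Finset.card_pos.1 (by have := hcount s s.lt_succ_self; omega)
    obtain ⟨hiI, hiW⟩ := Finset.mem_filter.1 hi
    have hcount' : ∀ e < s, s ≤ e + #{l ∈ I.erase i | e + #S₀ < finrank K (W l)} := by
      intro e he
      rw [Finset.filter_erase]
      have := hcount e (by omega)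
      have := Finset.pred_card_le_card_erase (s := {l ∈ I | e + #S₀ < finrank K (W l)}) (a := i)
      omega
    obtain ⟨S, hSI, hS, w, hw₀, hwW, hw⟩ := ih (hI.mono_right (I.erase_subset i)) hcount'
    have hiS : i ∉ S := fun h => I.notMem_erase i (hSI h)
    have hiU : i ∉ S₀ ∪ S := Finset.notMem_union.2 ⟨Finset.disjoint_right.1 hI hiI, hiS⟩
    obtain ⟨x, hxW, hx⟩ : ∃ x ∈ W i, x ∉ Submodule.span K (w '' ↑(S₀ ∪ S)) := by
      refine exists_mem_notMem_of_finrank_lt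
        ((finrank_image_finset_le_card w _).trans_lt (lt_of_le_of_lt ?_ hiW))
      exact (Finset.card_union_le _ _).trans (by omega)
    have hne : ∀ l ∈ S₀ ∪ S, Function.update w i x l = w l := fun l hl =>
      Function.update_of_ne (ne_of_mem_of_not_mem hl hiU) _ _
    refine ⟨insert i S, Finset.insert_subset hiI (hSI.trans (I.erase_subset i)),
      by rw [Finset.card_insert_of_notMem hiS, hS], Function.update w i x, fun l hl => ?_,
      (Finset.forall_mem_insert _ _ _).2 ⟨by simpa using hxW, fun l hl => ?_⟩, ?_⟩
    · rw [hne l (Finset.mem_union_left _ hl), hw₀ hl]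
    · rw [hne l (Finset.mem_union_right _ hl)]
      exact hwW l hl
    · rw [Finset.union_insert, Finset.coe_insert]
      exact linearIndepOn_update_insert (by exact_mod_cast hiU) hw hx

theorem exists_linearIndependent_apply_eq_notMem_span [FiniteDimensional K M] [Fintype ι]
    (hcard : Fintype.card ι < finrank K M) (j : ι) {y z : M} (hy : y ≠ 0)
    (hz : z ∉ Submodule.span K {y}) :
    ∃ x : ι → M, LinearIndependent K x ∧ x j = y ∧ z ∉ Submodule.span K (Set.range x) := by
  classical
  let S₀ : Finset (Option ι) := {none, some j}
  let w₀ : Option ι → M := fun o => o.elim z fun _ => y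
  have h₀ : LinearIndepOn K w₀ S₀ := by
    rw [Finset.coe_pair, linearIndepOn_insert (by simp)]
    simpa [w₀, hy] using hz
  have hS₀ : #S₀ = 2 := Finset.card_pair (by simp)
  obtain ⟨S, hSI, hS, w, hw₀, -, hw⟩ :=
    exists_linearIndepOn_union_of_card_filter_lt_finrank (fun _ => ⊤) h₀
      (disjoint_compl_right (a := S₀)) (s := #S₀ᶜ) (by
        intro e he
        rw [Finset.card_compl, Fintype.card_option] at he
        rw [Finset.filter_true_of_mem fun _ _ => by rw [finrank_top]; omega]
        omega)
  have hunion : S₀ ∪ S = Finset.univ := by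
    rw [Finset.eq_of_subset_of_card_le hSI hS.ge, Finset.union_compl]
  rw [hunion, Finset.coe_univ, linearIndepOn_univ_iff, linearIndependent_option,
    hw₀ (show none ∈ (S₀ : Set (Option ι)) by simp [S₀])] at hw
  exact ⟨w ∘ some, hw.1, hw₀ (by simp [S₀]), hw.2⟩

theorem span_range_add_single [DecidableEq ι] (v : ι → M) {j j' : ι} (hj : j' ≠ j) :
    Submodule.span K (Set.range (v + Pi.single j (v j'))) =
      Submodule.span K (Set.range v) := by
  have hv' : (v + Pi.single j (v j') : ι → M) j' = v j' := by simp [hj]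
  have hsingle {u : ι → M} (hu : u j' = v j') (l : ι) :
      (Pi.single j (v j') : ι → M) l ∈ Submodule.span K (Set.range u) := by
    rw [Pi.single_apply]
    split_ifs
    exacts [Submodule.subset_span ⟨j', hu⟩, Submodule.zero_mem _]
  apply le_antisymm <;> rw [Submodule.span_le] <;> rintro _ ⟨l, rfl⟩
  · exact Submodule.add_mem _ (Submodule.subset_span ⟨l, rfl⟩) (hsingle rfl l)
  · exact (Submodule.add_mem_iff_left _ (hsingle hv' l)).1 (Submodule.subset_span ⟨l, rfl⟩)

/- With `x` independent, `x j' = y` and `z = φ (Pi.single j y)` outside the span of `x`, adding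
`y` to the `j`-th entry of `x` preserves independence and the span of `x`, but adds `z` to `φ x`. -/
theorem map_single_mem_span_singleton [FiniteDimensional K M] [Fintype ι] [DecidableEq ι]
    (hcard : Fintype.card ι < finrank K M) (φ : (ι → M) →ₗ[K] M)
    (hφ : ∀ x, LinearIndependent K x → φ x ∈ Submodule.span K (Set.range x)) (j : ι) (y : M) :
    φ (Pi.single j y) ∈ Submodule.span K {y} := by
  by_contra hz
  have hy : y ≠ 0 := by rintro rfl; simp at hz
  by_cases hsub : ∀ l, l = j
  · have : Unique ι := ⟨⟨j⟩, hsub⟩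
    have hconst : (Pi.single j y : ι → M) = fun _ => y := by
      funext l
      rw [hsub l, Pi.single_eq_same]
    rw [hconst] at hz
    refine hz (Set.range_const (ι := ι) (c := y) ▸ hφ _ ?_)
    simpa using hy
  push Not at hsub
  obtain ⟨j', hj'⟩ := hsub
  obtain ⟨x, hx, rfl, hzx⟩ := exists_linearIndependent_apply_eq_notMem_span hcard j' hy hz
  have hspan := span_range_add_single (K := K) x hj'
  have hx' : LinearIndependent K (x + Pi.single j (x j')) := by
    rw [linearIndependent_iff_card_eq_finrank_span] at hx ⊢
    rw [hx, Set.finrank, Set.finrank, hspan]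
  have hφx' := hφ _ hx'
  rw [map_add, hspan, Submodule.add_mem_iff_right _ (hφ x hx)] at hφx'
  exact hzx hφx'

end LinearAlgebra

theorem sum_add_slack_le_card_mul {ι : Type*} [Fintype ι] (d : ι → ℕ) {b e k : ℕ}
    (hd : ∀ i, d i ≤ b) (hb : b ≤ Fintype.card ι) (he : e + #{i | e < d i} ≤ k) :
    ∑ i, d i + (#{i | e < d i} * (Fintype.card ι - b + e) +
      (k - (e + #{i | e < d i})) * Fintype.card ι) ≤ Fintype.card ι * k := by
  classical
  set T : Finset ι := {i | e < d i} with hT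
  have hsum : ∑ i, d i ≤ #T * b + #Tᶜ * e := by
    rw [← Finset.sum_add_sum_compl T, ← smul_eq_mul, ← smul_eq_mul]
    refine add_le_add (Finset.sum_le_card_nsmul _ _ _ fun i _ => hd i)
      (Finset.sum_le_card_nsmul _ _ _ fun i hi => ?_)
    simpa [hT] using hi
  have hcard : #T + #Tᶜ = Fintype.card ι := T.card_add_card_compl
  obtain ⟨x, hx⟩ := Nat.exists_eq_add_of_le he
  obtain ⟨y, hy⟩ := Nat.exists_eq_add_of_le hb
  rw [hy, hx, Nat.add_sub_cancel_left, Nat.add_sub_cancel_left, ← hy]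
  calc _ ≤ #T * b + #Tᶜ * e + (#T * (y + e) + x * Fintype.card ι) := by gcongr
    _ = #T * (b + y) + (#T + #Tᶜ) * e + x * Fintype.card ι := by ring
    _ = Fintype.card ι * (e + #T + x) := by rw [← hy, hcard]; ring

theorem forall_eq_or_card_support_eq {ι : Type*} [Fintype ι] (d : ι → ℕ) {b e k : ℕ}
    (hd : ∀ i, d i ≤ b) (hb : b ≤ Fintype.card ι) (he : e + #{i | e < d i} ≤ k)
    (hsum : ∑ i, d i = Fintype.card ι * k) :
    (∀ i, d i = k) ∨ k < b ∧ b = Fintype.card ι ∧ #{i | 0 < d i} = k := by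
  by_cases hle : ∀ i, d i ≤ k
  · refine .inl fun i => (Finset.sum_eq_sum_iff_of_le fun i _ => hle i).1 ?_ i (Finset.mem_univ i)
    simpa using hsum
  right
  push Not at hle
  obtain ⟨i, hi⟩ := hle
  have hT : 0 < #{i | e < d i} := Finset.card_pos.2 ⟨i, by simpa using by omega⟩
  have hslack := sum_add_slack_le_card_mul d hd hb he
  have hslack₀ : #{i | e < d i} * (Fintype.card ι - b + e) = 0 ∧
      (k - (e + #{i | e < d i})) * Fintype.card ι = 0 := by omega
  have hib := hd i
  have hbe : Fintype.card ι - b + e = 0 := (Nat.mul_eq_zero.1 hslack₀.1).resolve_left hT.ne'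
  have hk : k - (e + #{i | e < d i}) = 0 :=
    (Nat.mul_eq_zero.1 hslack₀.2).resolve_right (by omega)
  obtain rfl : e = 0 := by omega
  omega

theorem exists_linearOrder_forall_le {α : Type*} (i : α) : ∃ _ : LinearOrder α, ∀ l, l ≤ i := by
  classical
  let := IsWellOrder.linearOrder (WellOrderingRel (α := α))
  have hinj : Function.Injective fun l => toLex (decide (l = i), l) := fun l l' h => by
    simpa using congrArg (fun p => (ofLex p).2) h
  refine ⟨LinearOrder.lift' _ hinj, fun l => ?_⟩
  change toLex (decide (l = i), l) ≤ toLex (decide (i = i), i)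
  rw [Prod.Lex.toLex_le_toLex]
  by_cases hl : l = i <;> simp [hl]

section RowRank

variable {K E ι : Type*} [DivisionRing K] [AddCommGroup E] [Module K E]

/-- `RankLE V k` says that the elements of `V`, read as matrices with rows in `E`, have rank at
most `k`. -/
def RankLE (V : Submodule K (ι → E)) (k : ℕ) : Prop :=
  ∀ A ∈ V, (Set.range A).finrank K ≤ k

/-- The subspace of the elements of `V` whose rows indexed by `s` are zero. -/
def vanishOn (V : Submodule K (ι → E)) (s : Set ι) : Submodule K (ι → E) :=
  V ⊓ Submodule.pi s fun _ => ⊥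

/-- The space of `i`-th rows of the elements of `V` whose rows indexed by `s` are zero. With
`s = Set.Iio i` these are the pivot rows at `i` of the echelon form of `V`. -/
def leadSpace (V : Submodule K (ι → E)) (s : Set ι) (i : ι) : Submodule K E :=
  (vanishOn V s).map (LinearMap.proj i)

variable {V V' : Submodule K (ι → E)} {s : Set ι} {k : ℕ}

theorem mem_vanishOn {A : ι → E} : A ∈ vanishOn V s ↔ A ∈ V ∧ ∀ i ∈ s, A i = 0 := by
  simp [vanishOn, Submodule.mem_pi]

theorem mem_leadSpace {i : ι} {x : E} :
    x ∈ leadSpace V s i ↔ ∃ A ∈ V, (∀ l ∈ s, A l = 0) ∧ A i = x := by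
  simp [leadSpace, mem_vanishOn, and_assoc]

theorem vanishOn_le : vanishOn V s ≤ V := inf_le_left

theorem vanishOn_empty : vanishOn V ∅ = V := by
  ext A
  simp [mem_vanishOn]

theorem vanishOn_univ : vanishOn V Set.univ = ⊥ := by
  refine (Submodule.eq_bot_iff _).2 fun A hA => ?_
  funext i
  exact (mem_vanishOn.1 hA).2 i trivial

theorem vanishOn_insert (i : ι) :
    vanishOn V (insert i s) = vanishOn V s ⊓ LinearMap.ker (LinearMap.proj i) := by
  ext A
  simp only [mem_vanishOn, Submodule.mem_inf, LinearMap.mem_ker, LinearMap.proj_apply,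
    Set.forall_mem_insert]
  tauto

theorem pi_leadSpace_compl_le [Finite ι] :
    (Submodule.pi Set.univ fun i => leadSpace V {i}ᶜ i) ≤ V := by
  classical
  have := Fintype.ofFinite ι
  intro w hw
  rw [← Finset.univ_sum_single w]
  refine V.sum_mem fun i _ => ?_
  obtain ⟨A, hA, hA₀, hAi⟩ := mem_leadSpace.1 (hw i (Set.mem_univ i))
  convert hA using 1
  funext l
  by_cases hl : l = i
  · rw [hl, Pi.single_eq_same, hAi]
  · rw [Pi.single_eq_of_ne hl, hA₀ l hl]

namespace RankLE

theorem mono (hV : RankLE V k) (hle : V' ≤ V) : RankLE V' k := fun A hA => hV A (hle hA)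

theorem pi_const [FiniteDimensional K E] (W : Submodule K E) :
    RankLE (Submodule.pi Set.univ fun _ : ι => W) (finrank K W) := fun _ hA =>
  Submodule.finrank_mono (Submodule.span_le.2 (Set.range_subset_iff.2 fun i => hA i trivial))

end RankLE

section Echelon

variable [LinearOrder ι]

theorem vanishOn_eq_bot_of_leadSpace_eq_bot [WellFoundedLT ι]
    (h : ∀ i ∉ s, leadSpace V (Set.Iio i) i = ⊥) : vanishOn V s = ⊥ := by
  rw [eq_bot_iff]
  intro A hA
  obtain ⟨hAV, hA₀⟩ := mem_vanishOn.1 hA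
  rw [Submodule.mem_bot]
  funext i
  induction i using WellFoundedLT.induction with
  | ind i ih =>
    by_cases hi : i ∈ s
    · exact hA₀ i hi
    · rw [Pi.zero_apply, ← Submodule.mem_bot K, ← h i hi]
      exact mem_leadSpace.2 ⟨A, hAV, ih, rfl⟩

/- Going down the rows, replace `w i` by the `i`-th row of `A`, adding to `A` beforehand an element
of `V` with leading row `w i` if independence would otherwise be lost. -/
theorem exists_mem_linearIndepOn_of_mem_leadSpace {S : Finset ι} {w : ι → E}
    (hwV : ∀ i ∈ S, w i ∈ leadSpace V (Set.Iio i) i) (hw : LinearIndepOn K w S) :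
    ∃ A ∈ V, LinearIndepOn K A S := by
  have key (P : Finset ι) (hP : P ⊆ S) : ∃ A ∈ V, LinearIndepOn K (P.piecewise A w) S := by
    induction P using Finset.induction_on_max with
    | empty => exact ⟨0, V.zero_mem, by simpa using hw⟩
    | insert i P hi ih =>
      obtain ⟨A, hA, hind⟩ := ih ((Finset.subset_insert i P).trans hP)
      have hiS : i ∈ S := hP (Finset.mem_insert_self i P)
      have hiP : i ∉ P := fun h => (hi i h).false
      obtain ⟨B, hB, hB₀, hBi⟩ := mem_leadSpace.1 (hwV i hiS)
      rcases linearIndepOn_update_or_update_add (Finset.mem_coe.2 hiS) hind (A i) with h | h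
      · exact ⟨A, hA, by rwa [Finset.piecewise_insert]⟩
      · refine ⟨A + B, V.add_mem hA hB, ?_⟩
        have hP' : P.piecewise (A + B) w = P.piecewise A w :=
          P.piecewise_congr (fun l hl => by rw [Pi.add_apply, hB₀ l (hi l hl), add_zero])
            fun _ _ => rfl
        rwa [Finset.piecewise_insert, hP', Pi.add_apply, hBi,
          ← Finset.piecewise_eq_of_notMem P A w hiP]
  obtain ⟨A, hA, hind⟩ := key S subset_rfl
  exact ⟨A, hA, hind.congr fun i hi => S.piecewise_eq_of_mem _ _ hi⟩

variable [Fintype ι] [FiniteDimensional K E]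

theorem sum_finrank_leadSpace (V : Submodule K (ι → E)) :
    ∑ i, finrank K (leadSpace V (Set.Iio i) i) = finrank K V := by
  have key (s : Finset ι) : ∑ i ∈ s, finrank K (leadSpace V (s ∩ Set.Iio i) i) +
      finrank K (vanishOn V s) = finrank K V := by
    induction s using Finset.induction_on_max with
    | empty => rw [Finset.sum_empty, zero_add, Finset.coe_empty, vanishOn_empty]
    | insert i s hi ih =>
      have hrow := finrank_map_add_finrank_inf_ker (LinearMap.proj i) (vanishOn V s)
      rw [← vanishOn_insert] at hrow
      have hmax : (↑(insert i s) ∩ Set.Iio i : Set ι) = s := by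
        ext l
        have := hi l
        simp only [Finset.coe_insert, Set.mem_inter_iff, Set.mem_insert_iff, Set.mem_Iio,
          Finset.mem_coe]
        grind
      have hlow : ∀ l ∈ s, (↑(insert i s) ∩ Set.Iio l : Set ι) = ↑s ∩ Set.Iio l := by
        intro l hl
        have hil : i ∉ Set.Iio l := (hi l hl).not_gt
        rw [Finset.coe_insert, Set.insert_inter_of_notMem hil]
      rw [Finset.sum_insert fun h => (hi i h).false, hmax,
        Finset.sum_congr rfl fun l hl => by rw [hlow l hl], Finset.coe_insert, ← ih, ← hrow,
        leadSpace]
      ring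
  have h := key Finset.univ
  rw [Finset.coe_univ, vanishOn_univ, finrank_bot, add_zero] at h
  rw [← h]
  exact Finset.sum_congr rfl fun i _ => by rw [Set.univ_inter]

theorem RankLE.exists_add_card_filter_le (hV : RankLE V k) :
    ∃ e, e + #{i | e < finrank K (leadSpace V (Set.Iio i) i)} ≤ k := by
  by_contra! hcount
  obtain ⟨S, -, hS, w, -, hwV, hw⟩ := exists_linearIndepOn_union_of_card_filter_lt_finrank
    (fun i => leadSpace V (Set.Iio i) i) (w₀ := 0) (S₀ := ∅) (s := k + 1) (by simp)
    (Finset.disjoint_empty_left Finset.univ) fun e _ => by simpa using hcount e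
  rw [Finset.empty_union] at hw
  obtain ⟨A, hA, hAS⟩ := exists_mem_linearIndepOn_of_mem_leadSpace hwV hw
  have := (card_le_finrank_range_of_linearIndepOn hAS).trans (hV A hA)
  omega

theorem RankLE.finrank_leadSpace_eq_or (hV : RankLE V k) (hE : finrank K E ≤ Fintype.card ι)
    (hdim : finrank K V = Fintype.card ι * k) :
    (∀ i, finrank K (leadSpace V (Set.Iio i) i) = k) ∨
      k < finrank K E ∧ finrank K E = Fintype.card ι ∧
        ∃ T : Finset ι, #T = k ∧ vanishOn V T = ⊥ := by
  obtain ⟨e, he⟩ := hV.exists_add_card_filter_le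
  refine (forall_eq_or_card_support_eq _ (fun i => Submodule.finrank_le _) hE he
    (sum_finrank_leadSpace V ▸ hdim)).imp_right fun ⟨hk, hE, hT⟩ => ⟨hk, hE, _, hT, ?_⟩
  refine vanishOn_eq_bot_of_leadSpace_eq_bot fun i hi => ?_
  simpa using hi

end Echelon

namespace RankLE

variable [FiniteDimensional K E]

theorem card_le_of_linearIndepOn {W : ι → Submodule K E} (hW : RankLE (Submodule.pi Set.univ W) k)
    {S : Finset ι} {w : ι → E} (hwW : ∀ i ∈ S, w i ∈ W i) (hw : LinearIndepOn K w S) :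
    #S ≤ k := by
  classical
  have hmem : S.piecewise w 0 ∈ Submodule.pi Set.univ W := fun i _ => by
    by_cases hi : i ∈ S <;> simp [hi, hwW]
  exact (card_le_finrank_range_of_linearIndepOn
    (hw.congr fun i hi => (S.piecewise_eq_of_mem _ _ hi).symm)).trans (hW _ hmem)

theorem le_span_image_of_linearIndepOn {W : ι → Submodule K E}
    (hW : RankLE (Submodule.pi Set.univ W) k) {S : Finset ι} {w : ι → E}
    (hwW : ∀ i ∈ S, w i ∈ W i) (hw : LinearIndepOn K w S) (hS : k ≤ #S) {j : ι} (hj : j ∉ S) :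
    W j ≤ Submodule.span K (w '' S) := by
  classical
  intro y hyW
  by_contra hy
  have hne {l : ι} (hl : l ∈ S) : l ≠ j := ne_of_mem_of_not_mem hl hj
  have hcard : #(insert j S) ≤ k :=
    hW.card_le_of_linearIndepOn (w := Function.update w j y)
      (by simpa [hyW] using fun l hl => by simpa [hne hl] using hwW l hl)
      (by simpa using linearIndepOn_update_insert (by exact_mod_cast hj) hw hy)
  rw [Finset.card_insert_of_notMem hj] at hcard
  omega

variable [Fintype ι]

theorem finrank_le (hV : RankLE V k) (hE : finrank K E ≤ Fintype.card ι) :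
    finrank K V ≤ Fintype.card ι * k := by
  let := IsWellOrder.linearOrder (WellOrderingRel (α := ι))
  obtain ⟨e, he⟩ := hV.exists_add_card_filter_le
  have hslack := sum_add_slack_le_card_mul _ (fun i => Submodule.finrank_le _) hE he
  rw [sum_finrank_leadSpace] at hslack
  omega

/- If `x` lies in `W i` but not in `W j`, then `x` extends to `k` independent vectors taken from
distinct `W l` with `l ≠ j`. Their span contains, hence equals, `W j`. -/
theorem pi_eq {W : ι → Submodule K E} (hW : RankLE (Submodule.pi Set.univ W) k)
    (hdim : ∀ i, finrank K (W i) = k) (hE : finrank K E ≤ Fintype.card ι) (i j : ι) :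
    W i = W j := by
  classical
  refine Submodule.eq_of_le_of_finrank_eq (fun x hxi => ?_) ((hdim i).trans (hdim j).symm)
  by_contra hxj
  have hij : i ≠ j := by rintro rfl; exact hxj hxi
  have hx : x ≠ 0 := by rintro rfl; exact hxj (zero_mem _)
  have hind : LinearIndepOn K (fun _ => x) (({i} : Finset ι) : Set ι) := by simpa using hx
  have hk₀ : 1 ≤ k := hW.card_le_of_linearIndepOn (by simpa using hxi) hind
  have hkE : k < finrank K E := by
    rw [← hdim j]
    exact Submodule.finrank_lt fun h => hxj (h ▸ Submodule.mem_top)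
  have hpair : #({i, j} : Finset ι)ᶜ = Fintype.card ι - 2 := by
    rw [Finset.card_compl, Finset.card_pair hij]
  obtain ⟨S, hSI, hS, w, hw₀, hwW, hw⟩ :=
    exists_linearIndepOn_union_of_card_filter_lt_finrank W hind (I := {i, j}ᶜ) (s := k - 1)
      (by simp) (by
        intro e he
        rw [Finset.filter_true_of_mem fun l _ => by rw [hdim, Finset.card_singleton]; omega]
        omega)
  have hiS : i ∉ S := fun h => by simpa using hSI h
  have hjS : j ∉ S := fun h => by simpa using hSI h
  have hwi : w i = x := hw₀ (by simp)
  rw [Finset.singleton_union] at hw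
  have hcard : #(insert i S) = k := by
    rw [Finset.card_insert_of_notMem hiS]
    omega
  have hle : W j ≤ Submodule.span K (w '' ↑(insert i S)) :=
    hW.le_span_image_of_linearIndepOn
      ((Finset.forall_mem_insert _ _ _).2 ⟨hwi ▸ hxi, hwW⟩) hw hcard.ge (by simp [hij.symm, hjS])
  rw [Submodule.eq_of_le_of_finrank_le hle ((finrank_image_finset_le_card w _).trans
    (hcard.trans (hdim j).symm).le)] at hxj
  exact hxj (Submodule.subset_span ⟨i, by simp, hwi⟩)

theorem eq_pi_const_or_vanishOn_eq_bot [Nonempty ι] (hV : RankLE V k)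
    (hE : finrank K E ≤ Fintype.card ι) (hdim : finrank K V = Fintype.card ι * k) :
    (∃ W : Submodule K E, finrank K W = k ∧ V = Submodule.pi Set.univ fun _ => W) ∨
      k < finrank K E ∧ finrank K E = Fintype.card ι ∧
        ∃ T : Finset ι, #T = k ∧ vanishOn V T = ⊥ := by
  refine or_iff_not_imp_right.2 fun hT => ?_
  have hlead (i : ι) : finrank K (leadSpace V {i}ᶜ i) = k := by
    obtain ⟨_, htop⟩ := exists_linearOrder_forall_le i
    have hIio : Set.Iio i = {i}ᶜ := by
      ext l
      exact (htop l).lt_iff_ne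
    rw [← hIio]
    exact (hV.finrank_leadSpace_eq_or hE hdim).resolve_right hT i
  obtain ⟨i₀⟩ := ‹Nonempty ι›
  have hle : (Submodule.pi Set.univ fun _ => leadSpace V {i₀}ᶜ i₀) ≤ V := by
    convert pi_leadSpace_compl_le (V := V) using 3 with i
    exact (hV.mono pi_leadSpace_compl_le).pi_eq hlead hE i₀ i
  refine ⟨_, hlead i₀, (Submodule.eq_of_le_of_finrank_eq hle ?_).symm⟩
  rw [finrank_pi_const, hlead, hdim]

end RankLE

section Restriction

variable [FiniteDimensional K E] {T : Finset ι}

theorem exists_linearEquiv_restrict (hT : vanishOn V T = ⊥)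
    (hdim : finrank K V = #T * finrank K E) :
    ∃ e : V ≃ₗ[K] (T → E), ∀ (A : V) (i : T), e A i = (A : ι → E) i := by
  let f : V →ₗ[K] (T → E) := (LinearMap.funLeft K E ((↑) : T → ι)).comp V.subtype
  have hf : Function.Injective f := by
    refine (injective_iff_map_eq_zero f).2 fun A hA => Subtype.ext ?_
    rw [Submodule.coe_zero, ← Submodule.mem_bot K, ← hT]
    exact mem_vanishOn.2 ⟨A.2, fun i hi => congrFun hA ⟨i, hi⟩⟩
  have := FiniteDimensional.of_injective f hf
  refine ⟨LinearMap.linearEquivOfInjective f hf ?_, fun _ _ => rfl⟩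
  simpa [Module.finrank_pi_fintype] using hdim

/- If the rows of `A` in `T` are independent, they already span the row space of `A`. As `V`
restricts isomorphically onto `T → E`, this forces each row of `A` to be a sum of multiples of the
rows in `T`, whether or not these are independent. -/
theorem RankLE.apply_mem_span_image (hV : RankLE V #T) (hT : vanishOn V T = ⊥)
    (hdim : finrank K V = #T * finrank K E) (hlt : #T < finrank K E) {A : ι → E} (hA : A ∈ V)
    (c : ι) : A c ∈ Submodule.span K (A '' T) := by
  classical
  obtain ⟨e, he⟩ := exists_linearEquiv_restrict hT hdim
  let φ : (T → E) →ₗ[K] E := LinearMap.proj c ∘ₗ V.subtype ∘ₗ e.symm.toLinearMap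
  have hφ (x : T → E) (hx : LinearIndependent K x) :
      φ x ∈ Submodule.span K (Set.range x) := by
    have hxB (i : T) : (e.symm x : ι → E) i = x i := by rw [← he, e.apply_symm_apply]
    have hle : Submodule.span K (Set.range x) ≤ Submodule.span K (Set.range (e.symm x : ι → E)) :=
      Submodule.span_mono (Set.range_subset_iff.2 fun i => ⟨i, hxB i⟩)
    have := hV _ (e.symm x).2
    rw [Submodule.eq_of_le_of_finrank_le hle (by rwa [finrank_span_eq_card hx, Fintype.card_coe])]
    exact Submodule.subset_span ⟨c, rfl⟩
  have hAc : φ (e ⟨A, hA⟩) = A c := by simp [φ]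
  rw [← hAc, ← Finset.univ_sum_single (e ⟨A, hA⟩), map_sum]
  refine Submodule.sum_mem _ fun i _ => ?_
  have hrow : e ⟨A, hA⟩ i ∈ A '' T := ⟨i, i.2, (he ⟨A, hA⟩ i).symm⟩
  exact Submodule.span_mono (Set.singleton_subset_iff.2 hrow)
    (map_single_mem_span_singleton (by simpa using hlt) φ hφ i _)

theorem RankLE.vanishOn_singleton (hV : RankLE V #T) (hT : vanishOn V T = ⊥)
    (hdim : finrank K V = #T * finrank K E) (hlt : #T < finrank K E) {i : ι} (hi : i ∈ T) :
    RankLE (vanishOn V {i}) (#T - 1) := by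
  classical
  intro A hA
  obtain ⟨hAV, hAi⟩ := mem_vanishOn.1 hA
  rw [← Finset.card_erase_of_mem hi]
  refine le_trans (Submodule.finrank_mono ?_) (finrank_image_finset_le_card A (T.erase i))
  refine Submodule.span_le.2 (Set.range_subset_iff.2 fun c => ?_)
  have hrow := hV.apply_mem_span_image hT hdim hlt hAV c
  rwa [← Finset.insert_erase hi, Finset.coe_insert, Set.image_insert_eq, hAi i rfl,
    Submodule.span_insert_zero] at hrow

end Restriction

theorem finrank_le_finrank_vanishOn_singleton_add [FiniteDimensional K E] [Finite ι]
    (V : Submodule K (ι → E)) (i : ι) :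
    finrank K V ≤ finrank K (vanishOn V {i}) + finrank K E := by
  rw [← finrank_map_add_finrank_inf_ker (LinearMap.proj i) V, ← insert_empty_eq i,
    vanishOn_insert, vanishOn_empty, add_comm]
  gcongr
  exact Submodule.finrank_le _

theorem RankLE.exists_le_rankLE [Fintype ι] [FiniteDimensional K E] (hV : RankLE V (k + 1))
    (hE : finrank K E ≤ Fintype.card ι) (hdim : finrank K V = Fintype.card ι * (k + 1)) :
    ∃ V' ≤ V, RankLE V' k ∧ Fintype.card ι * k ≤ finrank K V' := by
  rcases isEmpty_or_nonempty ι
  · refine ⟨⊥, bot_le, fun A _ => ?_, by simp⟩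
    rw [Set.finrank, Set.range_eq_empty, Submodule.span_empty, finrank_bot]
    exact k.zero_le
  rcases hV.eq_pi_const_or_vanishOn_eq_bot hE hdim with ⟨W, hW, rfl⟩ | ⟨hk, hEι, T, hT, hbot⟩
  · obtain ⟨W', hW'W, rfl⟩ := exists_submodule_le_finrank_eq (k.le_succ.trans hW.ge)
    exact ⟨_, Submodule.pi_mono fun _ _ => hW'W, .pi_const W', (finrank_pi_const W').ge⟩
  · rw [← hT] at hV hk
    obtain ⟨i, hi⟩ : T.Nonempty := Finset.card_pos.1 (by omega)
    have hrank := hV.vanishOn_singleton hbot (by rw [hdim, hT, hEι, mul_comm]) hk hi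
    rw [hT, Nat.add_sub_cancel] at hrank
    refine ⟨_, vanishOn_le, hrank, ?_⟩
    have := finrank_le_finrank_vanishOn_singleton_add V i
    rw [hdim, hEι, mul_add_one] at this
    omega

end RowRank

section Anticode

variable {K : Type*} [Field K] {a b k : ℕ} {𝒜 : Submodule K (Matrix (Fin a) (Fin b) K)}

theorem bddAbove_setOf_rank (𝒜 : Submodule K (Matrix (Fin a) (Fin b) K)) :
    BddAbove {w | ∃ A ∈ 𝒜, A.rank = w} :=
  ⟨b, by rintro _ ⟨A, -, rfl⟩; exact A.rank_le_width⟩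

theorem rank_le_maxrank {A : Matrix (Fin a) (Fin b) K} (hA : A ∈ 𝒜) : A.rank ≤ maxrank 𝒜 :=
  le_csSup (bddAbove_setOf_rank 𝒜) ⟨A, hA, rfl⟩

theorem exists_rank_eq_maxrank (𝒜 : Submodule K (Matrix (Fin a) (Fin b) K)) :
    ∃ A ∈ 𝒜, A.rank = maxrank 𝒜 :=
  Nat.sSup_mem (s := {w | ∃ A ∈ 𝒜, A.rank = w}) ⟨_, 0, 𝒜.zero_mem, rfl⟩ (bddAbove_setOf_rank 𝒜)

theorem maxrank_le_iff : maxrank 𝒜 ≤ k ↔ ∀ A ∈ 𝒜, A.rank ≤ k := by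
  obtain ⟨A, hA, hrank⟩ := exists_rank_eq_maxrank 𝒜
  exact ⟨fun h A hA => (rank_le_maxrank hA).trans h, fun h => hrank ▸ h A hA⟩

theorem maxrank_le_width (𝒜 : Submodule K (Matrix (Fin a) (Fin b) K)) : maxrank 𝒜 ≤ b :=
  maxrank_le_iff.2 fun A _ => A.rank_le_width

/-- Reads the matrices of a subspace as families of rows. -/
def toRows : Submodule K (Matrix (Fin a) (Fin b) K) ≃o Submodule K (Fin a → Fin b → K) :=
  Submodule.orderIsoMapComap (Matrix.ofLinearEquiv K).symm

theorem finrank_toRows (𝒜 : Submodule K (Matrix (Fin a) (Fin b) K)) :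
    finrank K (toRows 𝒜) = finrank K 𝒜 :=
  LinearEquiv.finrank_map_eq (Matrix.ofLinearEquiv K).symm 𝒜

theorem rankLE_toRows : RankLE (toRows 𝒜) k ↔ maxrank 𝒜 ≤ k := by
  rw [maxrank_le_iff]
  refine Set.forall_mem_image.trans (forall₂_congr fun A _ => ?_)
  rw [A.rank_eq_finrank_span_row]
  rfl

theorem finrank_le_mul_maxrank (hab : b ≤ a) (𝒜 : Submodule K (Matrix (Fin a) (Fin b) K)) :
    finrank K 𝒜 ≤ a * maxrank 𝒜 := by
  simpa [finrank_toRows] using (rankLE_toRows.2 (le_refl (maxrank 𝒜))).finrank_le (by simpa)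

theorem isOptAnticode_top (hab : b ≤ a) :
    IsOptAnticode (⊤ : Submodule K (Matrix (Fin a) (Fin b) K)) := by
  refine le_antisymm (finrank_le_mul_maxrank hab _) ?_
  rw [finrank_top, Module.finrank_matrix, finrank_self, mul_one, Fintype.card_fin, Fintype.card_fin]
  exact Nat.mul_le_mul_left a (maxrank_le_width _)

theorem IsOptAnticode.exists_le_maxrank_lt (h𝒜 : IsOptAnticode 𝒜) (hab : b ≤ a)
    (hpos : 0 < maxrank 𝒜) :
    ∃ 𝒜' ≤ 𝒜, IsOptAnticode 𝒜' ∧ maxrank 𝒜' < maxrank 𝒜 ∧ finrank K 𝒜 ≤ finrank K 𝒜' + a := by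
  obtain ⟨k, hk⟩ := Nat.exists_eq_add_of_le' hpos
  have hdim : finrank K 𝒜 = a * (k + 1) := by rw [h𝒜, hk]
  obtain ⟨V', hle, hrank, hV'⟩ := (rankLE_toRows.2 hk.le).exists_le_rankLE (by simpa)
    (by simpa [finrank_toRows] using hdim)
  obtain ⟨𝒜', rfl⟩ := toRows.surjective V'
  rw [rankLE_toRows] at hrank
  rw [finrank_toRows, Fintype.card_fin] at hV'
  refine ⟨𝒜', toRows.le_iff_le.1 hle, ?_, by omega, by rw [hdim, mul_add_one]; omega⟩
  exact le_antisymm (finrank_le_mul_maxrank hab _) ((Nat.mul_le_mul_left a hrank).trans hV')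

end Anticode

section Code

variable {K : Type*} [Field K] {r : ℕ}
  {𝒞 𝒟 : Submodule K (∀ i : Fin t, Matrix (Fin (m i)) (Fin (n i)) K)}
  {𝒜 : ∀ i : Fin t, Submodule K (Matrix (Fin (m i)) (Fin (n i)) K)}

theorem maxsrk_pi (𝒜 : ∀ i : Fin t, Submodule K (Matrix (Fin (m i)) (Fin (n i)) K)) :
    maxsrk (Submodule.pi Set.univ 𝒜) = ∑ i, maxrank (𝒜 i) := by
  refine IsGreatest.csSup_eq ⟨?_, ?_⟩
  · choose A hA hrank using fun i => exists_rank_eq_maxrank (𝒜 i)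
    exact ⟨A, fun i _ => hA i, Finset.sum_congr rfl fun i _ => hrank i⟩
  · rintro _ ⟨C, hC, rfl⟩
    exact Finset.sum_le_sum fun i _ => rank_le_maxrank (hC i trivial)

theorem codeWt_le_sum_maxrank (hopt : ∀ i, IsOptAnticode (𝒜 i))
    (hle : 𝒞 ≤ Submodule.pi Set.univ 𝒜) : codeWt 𝒞 ≤ ∑ i, maxrank (𝒜 i) :=
  Nat.sInf_le ⟨𝒜, hopt, hle, maxsrk_pi 𝒜⟩

theorem exists_sum_maxrank_eq_codeWt (hmn : ∀ i, n i ≤ m i)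
    (𝒞 : Submodule K (∀ i : Fin t, Matrix (Fin (m i)) (Fin (n i)) K)) :
    ∃ 𝒜 : ∀ i : Fin t, Submodule K (Matrix (Fin (m i)) (Fin (n i)) K),
      (∀ i, IsOptAnticode (𝒜 i)) ∧ 𝒞 ≤ Submodule.pi Set.univ 𝒜 ∧
        ∑ i, maxrank (𝒜 i) = codeWt 𝒞 := by
  obtain ⟨𝒜, hopt, hle, hwt⟩ := Nat.sInf_mem (s := {w | ∃ 𝒜 : ∀ i : Fin t,
    Submodule K (Matrix (Fin (m i)) (Fin (n i)) K), (∀ i, IsOptAnticode (𝒜 i)) ∧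
      𝒞 ≤ Submodule.pi Set.univ 𝒜 ∧ maxsrk (Submodule.pi Set.univ 𝒜) = w})
    ⟨_, fun _ => ⊤, fun i => isOptAnticode_top (hmn i), fun _ _ _ _ => trivial, rfl⟩
  exact ⟨𝒜, hopt, hle, (maxsrk_pi 𝒜).symm.trans hwt⟩

theorem gw_le_codeWt (hle : 𝒟 ≤ 𝒞) (hr : r ≤ finrank K 𝒟) : gw 𝒞 r ≤ codeWt 𝒟 :=
  Nat.sInf_le ⟨𝒟, hle, hr, rfl⟩

theorem exists_codeWt_eq_gw (hr : r ≤ finrank K 𝒞) :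
    ∃ 𝒟 ≤ 𝒞, r ≤ finrank K 𝒟 ∧ codeWt 𝒟 = gw 𝒞 r :=
  Nat.sInf_mem (s := {w | ∃ 𝒟 ≤ 𝒞, r ≤ finrank K 𝒟 ∧ codeWt 𝒟 = w}) ⟨_, 𝒞, le_rfl, hr, rfl⟩

theorem exists_maxrank_pos_of_sum_lt {J : Finset (Fin t)}
    (hJ : ∑ i ∈ J, n i < ∑ i, maxrank (𝒜 i)) : ∃ i ∉ J, 0 < maxrank (𝒜 i) := by
  by_contra! hzero
  refine hJ.not_ge ?_
  calc ∑ i, maxrank (𝒜 i) = ∑ i ∈ J, maxrank (𝒜 i) :=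
        (Finset.sum_subset J.subset_univ fun i _ hi => Nat.le_zero.1 (hzero i hi)).symm
    _ ≤ ∑ i ∈ J, n i := Finset.sum_le_sum fun i _ => maxrank_le_width _

theorem exists_le_codeWt_lt (hmn : ∀ i, n i ≤ m i) {J : Finset (Fin t)}
    (hJ : ∑ i ∈ J, n i < codeWt 𝒞) :
    ∃ i ∉ J, ∃ 𝒟 ≤ 𝒞, finrank K 𝒞 ≤ finrank K 𝒟 + m i ∧ codeWt 𝒟 < codeWt 𝒞 := by
  obtain ⟨𝒜, hopt, hle, hwt⟩ := exists_sum_maxrank_eq_codeWt hmn 𝒞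
  rw [← hwt] at hJ ⊢
  obtain ⟨i, hi, hpos⟩ := exists_maxrank_pos_of_sum_lt hJ
  obtain ⟨V, hV, hVopt, hVrank, hVdim⟩ := (hopt i).exists_le_maxrank_lt (hmn i) hpos
  refine ⟨i, hi, 𝒞 ⊓ V.comap (LinearMap.proj i), inf_le_left, ?_, lt_of_le_of_lt
    (codeWt_le_sum_maxrank (𝒜 := Function.update 𝒜 i V) (fun l => ?_) fun C hC l _ => ?_)
    (Finset.sum_lt_sum (fun l _ => ?_) ⟨i, Finset.mem_univ i, by simpa using hVrank⟩)⟩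
  · have hproj : 𝒞 ≤ (𝒜 i).comap (LinearMap.proj i) := fun C hC => hle hC i trivial
    have := finrank_add_finrank_le_finrank_inf_comap_add _ hproj hV
    omega
  all_goals obtain rfl | hl := eq_or_ne l i
  · simpa using hVopt
  · simpa [hl] using hopt l
  · simpa using hC.2
  · simpa [hl] using hle hC.1 l trivial
  · simpa using hVrank.le
  · simp [hl]

theorem gw_step_bound_general {M : ℕ} (hmn : ∀ i, n i ≤ m i) (J : Finset (Fin t))
    (hM : ∀ i ∉ J, m i ≤ M) (hr : r + M ≤ finrank K 𝒞)
    (hgt : ∑ i ∈ J, n i < gw 𝒞 (r + M)) : gw 𝒞 r + 1 ≤ gw 𝒞 (r + M) := by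
  obtain ⟨𝒟, h𝒟, hdim, hwt⟩ := exists_codeWt_eq_gw hr
  rw [← hwt] at hgt ⊢
  obtain ⟨i, hi, 𝒟', h𝒟', hdim', hlt⟩ := exists_le_codeWt_lt hmn hgt
  have hr' : r ≤ finrank K 𝒟' := by
    have := hM i hi
    omega
  exact (gw_le_codeWt (h𝒟'.trans h𝒟) hr').trans_lt hlt

end Code

/-- If `𝒞 ⊆ 𝕄` is a sum-rank metric code, `j ∈ [t]` and `r ∈ [dim 𝒞 - m j]`, then
`d_{r + m j}(𝒞) > n_1 + ⋯ + n_{j-1}` implies `d_{r + m j}(𝒞) ≥ d_r(𝒞) + 1`. -/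
theorem gw_step_bound (ht : 0 < t)
    (hm_mono : ∀ i j : Fin t, i ≤ j → m j ≤ m i)
    (hn_pos : ∀ i, 0 < n i) (hmn : ∀ i, n i ≤ m i)
    (𝒞 : Submodule F (∀ i : Fin t, Matrix (Fin (m i)) (Fin (n i)) F))
    (j : Fin t) (r : ℕ) (hr1 : 1 ≤ r) (hr2 : r + m j ≤ Module.finrank F 𝒞)
    (hgt : ∑ i ∈ Finset.Iio j, n i < gw 𝒞 (r + m j)) :
    gw 𝒞 r + 1 ≤ gw 𝒞 (r + m j) :=
  gw_step_bound_general hmn _ (fun i hi => hm_mono j i (by simpa using hi)) hr2 hgt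
end
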